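/- Assume 1 ≤ i ≤ n−1, k_i + k_{i+1} = m and w_i = w_{i+1}. Then the map q: X(k̲)^i_w̲ → Y(d_i·k̲)_{d_i·w̲} sending (L₁,…,L_n) to (L₁,…,L_{i−1}, (z−w_i)·L_{i+2}, …, (z−w_i)·L_n) is well-defined and surjective. Moreover, for each point (M₁,…,M_{n−2}) of Y(d_i·k̲)_{d_i·w̲}, setting L_{i+1} := {x ∈ K^m : (z−w_i)·x ∈ M_{i−1}} (an R-submodule with dim_ℂ(L_{i+1}/M_{i−1}) = m), the fibre of q over this point is in bijection, via (L_•) ↦ L_i/L_{i−1}, with the set of k_i-dimensional ℂ-subspaces of the m-dimensional space L_{i+1}/M_{i−1}. -/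

import Mathlib

open Polynomial

set_option synthInstance.maxHeartbeats 1000000
set_option maxHeartbeats 1000000

noncomputable section

abbrev KM (m : ℕ) := Fin m → RatFunc ℂ

abbrev SubM (m : ℕ) := Submodule (Polynomial ℂ) (KM m)

def polyL0 (m : ℕ) : SubM m :=
  Submodule.pi Set.univ fun _ => LinearMap.range (Algebra.linearMap (Polynomial ℂ) (RatFunc ℂ))

abbrev QuotMod (m : ℕ) (A B : SubM m) := ↥B ⧸ (A.comap B.subtype)

def fdim (m : ℕ) (A B : SubM m) : ℕ := Module.finrank ℂ (QuotMod m A B)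

def zmul (m : ℕ) (w : ℂ) : KM m →ₗ[Polynomial ℂ] KM m :=
  (Polynomial.X - Polynomial.C w) • LinearMap.id

def quotSmul (m : ℕ) (p : Polynomial ℂ) (A B : SubM m) :
    QuotMod m A B →ₗ[ℂ] QuotMod m A B where
  toFun v := p • v
  map_add' x y := smul_add p x y
  map_smul' c x := smul_comm p c x

def IsYChain (m n : ℕ) (k : ℕ → ℕ) (w : ℕ → ℂ) (L : ℕ → SubM m) : Prop :=
  L 0 = polyL0 m ∧
  (∀ i < n, L i ≤ L (i + 1)) ∧
  (∀ i < n, FiniteDimensional ℂ (QuotMod m (L i) (L (i + 1)))) ∧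
  (∀ i < n, fdim m (L i) (L (i + 1)) = k (i + 1)) ∧
  (∀ i < n, ∀ x ∈ L (i + 1), zmul m (w (i + 1)) x ∈ L i)

/-- `d_i` : deleting the `i`-th and `(i+1)`-st entries of a sequence. -/
def dropAt {α : Type*} (i : ℕ) (f : ℕ → α) : ℕ → α :=
  fun j => if j < i then f j else f (j + 2)

/-- The chain `q(L) = (L₁,…,L_{i-1},(z-w_i)·L_{i+2},…,(z-w_i)·L_n)`. -/
def qChain (m i : ℕ) (w : ℕ → ℂ) (L : ℕ → SubM m) : ℕ → SubM m :=
  fun j => if j < i then L j else (L (j + 2)).map (zmul m (w i))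

/-- Membership of a chain `L` in the fibre of
`q : X(k)^i_w → Y(d_i·k)_{d_i·w}` over the chain `Mc`. -/
def InFibre (m n i : ℕ) (k : ℕ → ℕ) (w : ℕ → ℂ) (Mc L : ℕ → SubM m) : Prop :=
  IsYChain m n k w L ∧
  (L (i + 1)).map (zmul m (w i)) = L (i - 1) ∧
  ∀ j ≤ n - 2, qChain m i w L j = Mc j

/-- The subspace `L_i/L_{i-1}` of `P/M_{i-1}`. -/
def fibreImg (m i : ℕ) (Mc : ℕ → SubM m) (P : SubM m) (L : ℕ → SubM m) :
    Submodule ℂ (QuotMod m (Mc (i - 1)) P) :=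
  Submodule.restrictScalars ℂ
    (Submodule.map (Submodule.mkQ ((Mc (i - 1)).comap P.subtype))
      ((L i).comap P.subtype))

lemma zmul_apply' (m : ℕ) (w : ℂ) (x : KM m) :
    zmul m w x = (Polynomial.X - Polynomial.C w) • x := rfl

lemma zmul_bij (m : ℕ) (w : ℂ) : Function.Bijective (zmul m w) := by
  have h0 : (algebraMap (Polynomial ℂ) (RatFunc ℂ) (X - C w)) ≠ 0 := by
    simpa using RatFunc.algebraMap_ne_zero (Polynomial.X_sub_C_ne_zero w)
  constructor
  · intro x y h
    funext j
    have := congrFun h j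
    simp only [zmul_apply', Pi.smul_apply, Algebra.smul_def] at this
    exact mul_left_cancel₀ h0 this
  · intro y
    refine ⟨fun j => (algebraMap (Polynomial ℂ) (RatFunc ℂ) (X - C w))⁻¹ * y j, ?_⟩
    funext j
    simp only [zmul_apply', Pi.smul_apply, Algebra.smul_def]
    rw [mul_inv_cancel_left₀ h0]

def zEquiv (m : ℕ) (w : ℂ) : KM m ≃ₗ[Polynomial ℂ] KM m :=
  LinearEquiv.ofBijective (zmul m w) (zmul_bij m w)

lemma map_comap_z (m : ℕ) (w : ℂ) (A : SubM m) : (A.comap (zmul m w)).map (zmul m w) = A :=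
  Submodule.map_comap_eq_of_surjective (zmul_bij m w).2 A

lemma comap_map_z (m : ℕ) (w : ℂ) (A : SubM m) : (A.map (zmul m w)).comap (zmul m w) = A :=
  Submodule.comap_map_eq_of_injective (zmul_bij m w).1 A

def mapQuotEquiv (m : ℕ) (w : ℂ) (A B : SubM m) :
    QuotMod m A B ≃ₗ[Polynomial ℂ] QuotMod m (A.map (zmul m w)) (B.map (zmul m w)) :=
  Submodule.Quotient.equiv _ _ ((zEquiv m w).submoduleMap B) (by
    ext ⟨y, hy⟩
    obtain ⟨x, hx, rfl⟩ := hy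
    simp only [Submodule.mem_map, Submodule.mem_comap, Submodule.subtype_apply]
    constructor
    · rintro ⟨a, ha, h⟩
      exact ⟨a, ha, congrArg Subtype.val h⟩
    · rintro ⟨a, ha, h⟩
      have : a = x := (zmul_bij m w).1 h
      subst this
      exact ⟨⟨a, hx⟩, ha, rfl⟩)

def FD (m : ℕ) (A B : SubM m) : Prop := FiniteDimensional ℂ (QuotMod m A B)

lemma fdim_map (m : ℕ) (w : ℂ) (A B : SubM m) :
    fdim m (A.map (zmul m w)) (B.map (zmul m w)) = fdim m A B :=
  (((mapQuotEquiv m w A B).restrictScalars ℂ).finrank_eq).symm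

lemma fin_map (m : ℕ) (w : ℂ) (A B : SubM m) :
    FD m (A.map (zmul m w)) (B.map (zmul m w)) ↔
      FD m A B :=
  ⟨fun h => have : FiniteDimensional ℂ _ := h; Module.Finite.equiv ((mapQuotEquiv m w A B).restrictScalars ℂ).symm,
   fun h => have : FiniteDimensional ℂ _ := h; Module.Finite.equiv ((mapQuotEquiv m w A B).restrictScalars ℂ)⟩

/-- image of `B` in `C/A` -/
def imgQ (m : ℕ) (A B C : SubM m) : Submodule (Polynomial ℂ) (QuotMod m A C) :=
  Submodule.map (Submodule.mkQ (A.comap C.subtype)) (B.comap C.subtype)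

lemma mk_mem_imgQ {m : ℕ} {A B C : SubM m} (hAB : A ≤ B) (x : C) :
    (Submodule.Quotient.mk x : QuotMod m A C) ∈ imgQ m A B C ↔ (x : KM m) ∈ B := by
  constructor
  · rintro ⟨y, hy, h⟩
    have h2 : ((y - x : C) : KM m) ∈ A := (Submodule.Quotient.eq (A.comap C.subtype)).1 h
    have h3 : (y : KM m) ∈ B := hy
    have := B.sub_mem h3 (hAB h2)
    simpa using this
  · intro h
    exact ⟨x, h, rfl⟩

def imgEquiv {m : ℕ} {A B C : SubM m} (hAB : A ≤ B) (hBC : B ≤ C) :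
    QuotMod m A B ≃ₗ[Polynomial ℂ] imgQ m A B C :=
  LinearEquiv.ofBijective
    (LinearMap.codRestrict (imgQ m A B C)
      (Submodule.mapQ (A.comap B.subtype) (A.comap C.subtype) (Submodule.inclusion hBC)
        (by intro x hx; exact hx))
      (by
        intro x
        induction x using Submodule.Quotient.induction_on with
        | _ x => exact (mk_mem_imgQ hAB _).2 x.2))
    (by
      constructor
      · rw [injective_iff_map_eq_zero]
        intro x
        induction x using Submodule.Quotient.induction_on with
        | _ x =>
          intro h
          have h' := congrArg Subtype.val h
          exact (Submodule.Quotient.mk_eq_zero _).2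
            ((Submodule.Quotient.mk_eq_zero (A.comap C.subtype)).1 h')
      · rintro ⟨y, hy⟩
        induction y using Submodule.Quotient.induction_on with
        | _ y =>
          exact ⟨Submodule.Quotient.mk ⟨y, (mk_mem_imgQ hAB _).1 hy⟩, rfl⟩)

def quotQuotEquiv {m : ℕ} {A B C : SubM m} (hAB : A ≤ B) :
    (QuotMod m A C ⧸ imgQ m A B C) ≃ₗ[Polynomial ℂ] QuotMod m B C :=
  Submodule.quotientQuotientEquivQuotient (A.comap C.subtype) (B.comap C.subtype)
    (Submodule.comap_mono hAB)

def imgC (m : ℕ) (A B C : SubM m) : Submodule ℂ (QuotMod m A C) :=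
  (imgQ m A B C).restrictScalars ℂ

def imgEquivC {m : ℕ} {A B C : SubM m} (hAB : A ≤ B) (hBC : B ≤ C) :
    QuotMod m A B ≃ₗ[ℂ] imgC m A B C :=
  (imgEquiv hAB hBC).restrictScalars ℂ

lemma imgC_finrank {m : ℕ} {A B C : SubM m} (hAB : A ≤ B) (hBC : B ≤ C) :
    Module.finrank ℂ (imgC m A B C) = fdim m A B :=
  ((imgEquiv hAB hBC).restrictScalars ℂ).finrank_eq.symm

def quotQuotC {m : ℕ} {A B C : SubM m} (hAB : A ≤ B) :
    (QuotMod m A C ⧸ imgC m A B C) ≃ₗ[ℂ] QuotMod m B C :=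
  (Submodule.Quotient.restrictScalarsEquiv ℂ (imgQ m A B C)).trans
    ((quotQuotEquiv hAB).restrictScalars ℂ)

lemma fin_trans {m : ℕ} {A B C : SubM m} (hAB : A ≤ B) (hBC : B ≤ C) :
    FD m A C ↔
    (FD m A B ∧ FD m B C) := by
  constructor
  · intro h
    have h' : FiniteDimensional ℂ (QuotMod m A C) := h
    have h'' : Module.Finite ℂ (imgC m A B C) := FiniteDimensional.finiteDimensional_submodule _
    exact ⟨Module.Finite.equiv (imgEquivC hAB hBC).symm,
      Module.Finite.equiv (quotQuotC hAB)⟩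
  · rintro ⟨h1, h2⟩
    unfold FD at h1 h2
    have : Module.Finite ℂ (imgC m A B C) :=
      Module.Finite.equiv (imgEquivC hAB hBC)
    have : Module.Finite ℂ (QuotMod m A C ⧸ imgC m A B C) :=
      Module.Finite.equiv (quotQuotC hAB).symm
    exact Module.Finite.of_submodule_quotient (imgC m A B C)

lemma fdim_add {m : ℕ} {A B C : SubM m} (hAB : A ≤ B) (hBC : B ≤ C)
    (h : FD m A C) :
    fdim m A C = fdim m A B + fdim m B C := by
  unfold FD at h
  have h1 := Submodule.finrank_quotient_add_finrank (imgC m A B C)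
  rw [imgC_finrank hAB hBC, (quotQuotC hAB).finrank_eq] at h1
  unfold fdim at *
  omega

/-- Colength of `M` in `φ⁻¹ M` is `m`. -/
def GoodDim (m : ℕ) (w : ℂ) (A : SubM m) : Prop :=
  A ≤ A.comap (zmul m w) ∧ FD m A (A.comap (zmul m w)) ∧
    fdim m A (A.comap (zmul m w)) = m

lemma le_comap_z (m : ℕ) (w : ℂ) (A : SubM m) : A ≤ A.comap (zmul m w) :=
  fun _ hx => A.smul_mem _ hx

lemma goodDim_step (m : ℕ) (w : ℂ) {A B : SubM m} (hAB : A ≤ B)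
    (hf : FD m A B) (h : GoodDim m w A) : GoodDim m w B := by
  obtain ⟨h1, h2, h3⟩ := h
  have hPQ : A.comap (zmul m w) ≤ B.comap (zmul m w) := Submodule.comap_mono hAB
  have f1 : FD m (A.comap (zmul m w)) (B.comap (zmul m w)) := by
    rw [← fin_map m w, map_comap_z, map_comap_z]; exact hf
  have d1 : fdim m (A.comap (zmul m w)) (B.comap (zmul m w)) = fdim m A B := by
    rw [← fdim_map m w, map_comap_z, map_comap_z]
  have f2 : FD m A (B.comap (zmul m w)) :=
    (fin_trans h1 hPQ).2 ⟨h2, f1⟩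
  have hB := le_comap_z m w B
  have e1 := fdim_add h1 hPQ f2
  have e2 := fdim_add hAB hB f2
  exact ⟨hB, ((fin_trans hAB hB).1 f2).2, by omega⟩

lemma mem_polyL0 (m : ℕ) (x : KM m) :
    x ∈ polyL0 m ↔ ∃ p : Fin m → Polynomial ℂ, x = fun j => algebraMap _ (RatFunc ℂ) (p j) := by
  simp only [polyL0, Submodule.mem_pi, Set.mem_univ, true_imp_iff, LinearMap.mem_range,
    Algebra.linearMap_apply]
  constructor
  · intro h
    choose p hp using h
    exact ⟨p, funext fun j => (hp j).symm⟩
  · rintro ⟨p, rfl⟩ j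
    exact ⟨p j, rfl⟩

/-- constant vectors -/
def constV (m : ℕ) : (Fin m → ℂ) →ₗ[ℂ] KM m where
  toFun c := fun j => algebraMap _ (RatFunc ℂ) (C (c j))
  map_add' x y := by funext j; simp
  map_smul' c x := by
    funext j
    simp only [Pi.smul_apply, smul_eq_mul, map_mul, RingHom.id_apply]
    rw [← IsScalarTower.algebraMap_smul (Polynomial ℂ) c
      (algebraMap (Polynomial ℂ) (RatFunc ℂ) (C (x j))), Algebra.smul_def]
    rfl

lemma constV_mem (m : ℕ) (c : Fin m → ℂ) : constV m c ∈ polyL0 m :=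
  (mem_polyL0 _ _).2 ⟨fun j => C (c j), rfl⟩

def zinv (m : ℕ) (w : ℂ) : KM m →ₗ[ℂ] KM m :=
  (((zEquiv m w).symm.restrictScalars ℂ : KM m ≃ₗ[ℂ] KM m) : KM m →ₗ[ℂ] KM m)

lemma zmul_zinv (m : ℕ) (w : ℂ) (x : KM m) : zmul m w (zinv m w x) = x :=
  (zEquiv m w).apply_symm_apply x

def baseMap (m : ℕ) (w : ℂ) :
    (Fin m → ℂ) →ₗ[ℂ] QuotMod m (polyL0 m) ((polyL0 m).comap (zmul m w)) :=
  ((Submodule.mkQ ((polyL0 m).comap ((polyL0 m).comap (zmul m w)).subtype)).restrictScalars ℂ).comp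
    (LinearMap.codRestrict (((polyL0 m).comap (zmul m w)).restrictScalars ℂ)
      ((zinv m w).comp (constV m)) (by
        intro c
        show zmul m w (zinv m w _) ∈ polyL0 m
        rw [zmul_zinv]
        exact constV_mem m c))

lemma baseMap_bij (m : ℕ) (w : ℂ) : Function.Bijective (baseMap m w) := by
  constructor
  · rw [injective_iff_map_eq_zero]
    intro c h
    have h1 : zinv m w (constV m c) ∈ polyL0 m := (Submodule.Quotient.mk_eq_zero ((polyL0 m).comap ((polyL0 m).comap (zmul m w)).subtype)).1 h
    obtain ⟨p, hp⟩ := (mem_polyL0 _ _).1 h1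
    have h2 := congrArg (zmul m w) hp
    rw [zmul_zinv] at h2
    funext j
    have h3 := congrFun h2 j
    rw [zmul_apply', Pi.smul_apply, Algebra.smul_def, ← map_mul] at h3
    have h4 : C (c j) = (X - C w) * p j := RatFunc.algebraMap_injective ℂ h3
    simpa using congrArg (Polynomial.eval w) h4
  · intro y
    induction y using Submodule.Quotient.induction_on with
    | _ y =>
      obtain ⟨y, hy⟩ := y
      obtain ⟨p, hp⟩ := (mem_polyL0 _ _).1 hy
      refine ⟨fun j => (p j).eval w, ?_⟩
      refine (Submodule.Quotient.eq _).2 ?_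
      show zinv m w (constV m _) - y ∈ polyL0 m
      have hd : ∀ j, ∃ q, p j - C ((p j).eval w) = (X - C w) * q :=
        fun j => Polynomial.X_sub_C_dvd_sub_C_eval
      choose q hq using hd
      refine (mem_polyL0 _ _).2 ⟨fun j => - q j, ?_⟩
      apply (zmul_bij m w).1
      rw [map_sub, zmul_zinv, hp]
      funext j
      rw [zmul_apply', Pi.smul_apply, Algebra.smul_def, ← map_mul, mul_neg, ← hq j]
      simp [constV]

lemma goodDim_L0 (m : ℕ) (w : ℂ) : GoodDim m w (polyL0 m) := by
  let e := LinearEquiv.ofBijective (baseMap m w) (baseMap_bij m w)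
  refine ⟨le_comap_z _ _ _, Module.Finite.equiv e, ?_⟩
  unfold fdim
  rw [← e.finrank_eq]
  simp

lemma goodDim_chain {m n : ℕ} {k : ℕ → ℕ} {w : ℕ → ℂ} {L : ℕ → SubM m}
    (h : IsYChain m n k w L) (a : ℂ) : ∀ j ≤ n, GoodDim m a (L j) := by
  obtain ⟨h0, h1, h2, -, -⟩ := h
  intro j
  induction j with
  | zero => intro _; rw [h0]; exact goodDim_L0 m a
  | succ j ih => intro hj; exact goodDim_step m a (h1 j hj) (h2 j hj) (ih (by omega))

lemma zmul_comm' (m : ℕ) (a b : ℂ) (x : KM m) : zmul m a (zmul m b x) = zmul m b (zmul m a x) := by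
  simp only [zmul_apply']
  exact smul_comm _ _ _

lemma q_lo {m i : ℕ} {w : ℕ → ℂ} {L : ℕ → SubM m} {j : ℕ} (h : j < i) :
    qChain m i w L j = L j := by simp [qChain, h]

lemma q_hi {m i : ℕ} {w : ℕ → ℂ} {L : ℕ → SubM m}
    (hX : (L (i + 1)).map (zmul m (w i)) = L (i - 1)) (hi : 1 ≤ i) {j : ℕ} (h : i ≤ j + 1) :
    qChain m i w L j = (L (j + 2)).map (zmul m (w i)) := by
  by_cases hj : j < i
  · have : i = j + 1 := by omega
    subst this
    rw [q_lo hj]; exact hX.symm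
  · simp [qChain, hj]

lemma drop_lo {α : Type*} {i j : ℕ} (f : ℕ → α) (h : j < i) : dropAt i f j = f j := by
  simp [dropAt, h]

lemma drop_hi {α : Type*} {i j : ℕ} (f : ℕ → α) (h : i ≤ j) : dropAt i f j = f (j + 2) := by
  simp [dropAt, Nat.not_lt.2 h]

lemma q_wd (m n : ℕ) (k : ℕ → ℕ) (w : ℕ → ℂ) (i : ℕ) (hi : 1 ≤ i) 
    (L : ℕ → SubM m) (hL : IsYChain m n k w L)
    (hX : (L (i + 1)).map (zmul m (w i)) = L (i - 1)) :
    IsYChain m (n - 2) (dropAt i k) (dropAt i w) (qChain m i w L) := by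
  obtain ⟨h0, h1, h2, h3, h4⟩ := hL
  refine ⟨by rw [q_lo (by omega), h0], ?_, ?_, ?_, ?_⟩ <;> intro j hj <;>
    by_cases hji : j + 1 < i
  · rw [q_lo hji, q_lo (by omega)]; exact h1 j (by omega)
  · rw [q_hi hX hi (by omega), q_hi hX hi (by omega)]
    exact Submodule.map_mono (h1 (j + 2) (by omega))
  · change FD m _ _
    rw [q_lo hji, q_lo (by omega)]; exact h2 j (by omega)
  · change FD m _ _
    rw [q_hi hX hi (by omega), q_hi hX hi (by omega), fin_map]
    exact h2 (j + 2) (by omega)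
  · rw [q_lo hji, q_lo (by omega), drop_lo _ hji]; exact h3 j (by omega)
  · rw [q_hi hX hi (by omega), q_hi hX hi (by omega), fdim_map, drop_hi _ (by omega)]
    exact h3 (j + 2) (by omega)
  · rw [q_lo hji, q_lo (by omega), drop_lo _ hji]; exact h4 j (by omega)
  · rw [q_hi hX hi (by omega), q_hi hX hi (by omega), drop_hi _ (by omega)]
    rintro _ ⟨x, hx, rfl⟩
    exact ⟨_, h4 (j + 2) (by omega) x hx, zmul_comm' _ _ _ _⟩

/-- The `R`-submodule of `P` corresponding to a subspace `V` of `P/M`. -/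
def liftV (m : ℕ) (a : ℂ) (A P : SubM m) (hP : P = A.comap (zmul m a))
    (V : Submodule ℂ (QuotMod m A P)) : SubM m where
  carrier := {x | ∃ h : x ∈ P, (Submodule.Quotient.mk ⟨x, h⟩ : QuotMod m A P) ∈ V}
  zero_mem' := ⟨P.zero_mem, V.zero_mem⟩
  add_mem' := by
    rintro x y ⟨hx, hx'⟩ ⟨hy, hy'⟩
    exact ⟨P.add_mem hx hy, V.add_mem hx' hy'⟩
  smul_mem' := by
    rintro p x ⟨hx, hx'⟩
    refine ⟨P.smul_mem p hx, ?_⟩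
    have key : (Submodule.Quotient.mk ⟨p • x, P.smul_mem p hx⟩ : QuotMod m A P) =
        (p.eval a) • (Submodule.Quotient.mk ⟨x, hx⟩ : QuotMod m A P) := by
      rw [← Submodule.Quotient.mk_smul]
      refine (Submodule.Quotient.eq _).2 ?_
      show p • x - (p.eval a) • x ∈ A
      obtain ⟨q, hq⟩ := Polynomial.X_sub_C_dvd_sub_C_eval (p := p) (a := a)
      have e : p • x - (p.eval a) • x = q • zmul m a x := by
        rw [zmul_apply', smul_smul, mul_comm, ← hq, sub_smul]
        congr 1
        rw [← IsScalarTower.algebraMap_smul (Polynomial ℂ) (p.eval a) x]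
        rfl
      rw [e]
      subst hP
      exact A.smul_mem _ hx
    rw [key]
    exact V.smul_mem _ hx'

lemma liftV_le {m : ℕ} {a : ℂ} {A P : SubM m} (hP : P = A.comap (zmul m a))
    (V : Submodule ℂ (QuotMod m A P)) : liftV m a A P hP V ≤ P := fun _ hx => hx.1

lemma le_liftV {m : ℕ} {a : ℂ} {A P : SubM m} (hP : P = A.comap (zmul m a))
    (V : Submodule ℂ (QuotMod m A P)) : A ≤ liftV m a A P hP V := by
  intro x hx
  have hx' : x ∈ P := by subst hP; exact le_comap_z m a A hx
  refine ⟨hx', ?_⟩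
  have : (Submodule.Quotient.mk ⟨x, hx'⟩ : QuotMod m A P) = 0 :=
    (Submodule.Quotient.mk_eq_zero _).2 hx
  rw [this]; exact V.zero_mem

lemma imgC_liftV {m : ℕ} {a : ℂ} {A P : SubM m} (hP : P = A.comap (zmul m a))
    (V : Submodule ℂ (QuotMod m A P)) : imgC m A (liftV m a A P hP V) P = V := by
  ext x
  induction x using Submodule.Quotient.induction_on with
  | _ x =>
    refine (mk_mem_imgQ (le_liftV hP V) x).trans ?_
    exact ⟨fun h => h.2, fun h => ⟨x.2, h⟩⟩

lemma fibreImg_eq (m i : ℕ) (Mc : ℕ → SubM m) (P : SubM m) (L : ℕ → SubM m) :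
    fibreImg m i Mc P L = imgC m (Mc (i - 1)) (L i) P := rfl

/-- the chain built from `Mc` and `V` -/
def buildL (m i : ℕ) (w : ℕ → ℂ) (Mc : ℕ → SubM m) (N : SubM m) : ℕ → SubM m :=
  fun j => if j < i then Mc j else if j = i then N else (Mc (j - 2)).comap (zmul m (w i))

lemma build_fibre (m n : ℕ) (k : ℕ → ℕ) (w : ℕ → ℂ)
    (i : ℕ) (hi : 1 ≤ i) (hin : i + 1 ≤ n)
    (hki : k i + k (i + 1) = m) (hww : w i = w (i + 1)) (Mc : ℕ → SubM m)
    (hM : IsYChain m (n - 2) (dropAt i k) (dropAt i w) Mc) (N : SubM m)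
    (hN1 : Mc (i - 1) ≤ N) (hN2 : N ≤ (Mc (i - 1)).comap (zmul m (w i)))
    (hN : fdim m (Mc (i - 1)) N = k i) :
    InFibre m n i k w Mc (buildL m i w Mc N) := by
  obtain ⟨g1, g2, g3⟩ := goodDim_chain hM (w i) (i - 1) (by omega)
  obtain ⟨h0, h1, h2, h3, h4⟩ := hM
  have lo : ∀ j, j < i → buildL m i w Mc N j = Mc j := fun j hj => by simp [buildL, hj]
  have mid : buildL m i w Mc N i = N := by simp [buildL]
  have hiL : ∀ j, i ≤ j + 1 →
      buildL m i w Mc N (j + 2) = (Mc j).comap (zmul m (w i)) := fun j hj => by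
    have a1 : ¬ (j + 2 < i) := by omega
    have a2 : ¬ (j + 2 = i) := by omega
    simp [buildL, a1, a2]
  obtain ⟨i, rfl⟩ : ∃ i', i = i' + 1 := ⟨i - 1, by omega⟩
  simp only [Nat.add_sub_cancel] at *
  have fd := (fin_trans hN1 hN2).1 g2
  have fa := fdim_add hN1 hN2 g2
  have top := hiL i le_rfl
  have cases4 : ∀ j, j < n → (j + 1 < i + 1) ∨ j = i ∨ j = i + 1 ∨
      ∃ t, j = t + 2 ∧ i + 1 ≤ t + 1 ∧ t < n - 2 := by
    intro j hj
    by_cases a : j + 1 < i + 1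
    · exact Or.inl a
    by_cases b : j = i
    · exact Or.inr (Or.inl b)
    by_cases c : j = i + 1
    · exact Or.inr (Or.inr (Or.inl c))
    · exact Or.inr (Or.inr (Or.inr ⟨j - 2, by omega, by omega, by omega⟩))
  refine ⟨⟨?_, ?_, ?_, ?_, ?_⟩, ?_, ?_⟩
  · rw [lo 0 (by omega), h0]
  · intro j hj
    rcases cases4 j hj with a | rfl | rfl | ⟨t, rfl, a, b⟩
    · rw [lo _ a, lo _ (by omega)]; exact h1 j (by omega)
    · rw [lo _ (by omega), mid]; exact hN1
    · rw [mid, top]; exact hN2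
    · rw [hiL t a, show t + 2 + 1 = (t + 1) + 2 by omega, hiL (t + 1) (by omega)]
      exact Submodule.comap_mono (h1 t b)
  · intro j hj
    change FD m _ _
    rcases cases4 j hj with a | rfl | rfl | ⟨t, rfl, a, b⟩
    · rw [lo _ a, lo _ (by omega)]; exact h2 j (by omega)
    · rw [lo _ (by omega), mid]; exact fd.1
    · rw [mid, top]; exact fd.2
    · rw [hiL t a, show t + 2 + 1 = (t + 1) + 2 by omega, hiL (t + 1) (by omega),
        ← fin_map m (w (i + 1)), map_comap_z, map_comap_z]
      exact h2 t b
  · intro j hj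
    rcases cases4 j hj with a | rfl | rfl | ⟨t, rfl, a, b⟩
    · rw [lo _ a, lo _ (by omega), h3 j (by omega), drop_lo _ a]
    · rw [lo _ (by omega), mid]; exact hN
    · rw [mid, top]; omega
    · rw [hiL t a, show t + 2 + 1 = (t + 1) + 2 by omega, hiL (t + 1) (by omega),
        ← fdim_map m (w (i + 1)), map_comap_z, map_comap_z, h3 t b, drop_hi _ a]
  · intro j hj
    rcases cases4 j hj with a | rfl | rfl | ⟨t, rfl, a, b⟩
    · rw [lo _ a, lo _ (by omega)]
      have := h4 j (by omega)
      rwa [drop_lo _ a] at this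
    · rw [lo j (by omega), mid]
      exact fun x hx => hN2 hx
    · rw [mid, top, ← hww]
      exact fun x hx => hN1 hx
    · rw [hiL t a, show t + 2 + 1 = (t + 1) + 2 by omega, hiL (t + 1) (by omega)]
      have := h4 t b
      rw [drop_hi _ a] at this
      intro x hx
      rw [Submodule.mem_comap, zmul_comm']
      exact this _ hx
  · rw [top, lo _ (by omega), map_comap_z]
    rfl
  · intro j hj
    by_cases a : j < i + 1
    · rw [q_lo a, lo _ a]
    · simp only [qChain, a, if_false]
      rw [hiL j (by omega), map_comap_z]

lemma fibre_facts {m n : ℕ} {k : ℕ → ℕ} {w : ℕ → ℂ}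
    {i : ℕ} (hi : 1 ≤ i) (hin : i + 1 ≤ n) {Mc L : ℕ → SubM m}
    (hL : InFibre m n i k w Mc L) :
    (∀ j, j < i → L j = Mc j) ∧
    (∀ j, i ≤ j + 1 → j + 2 ≤ n → L (j + 2) = (Mc j).comap (zmul m (w i))) ∧
    Mc (i - 1) ≤ L i ∧ L i ≤ (Mc (i - 1)).comap (zmul m (w i)) ∧
    fdim m (Mc (i - 1)) (L i) = k i := by
  obtain ⟨⟨h0, h1, h2, h3, h4⟩, hX, hq⟩ := hL
  have lo : ∀ j, j < i → L j = Mc j := fun j hj => by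
    rw [← hq j (by omega), q_lo hj]
  have hi' : ∀ j, i ≤ j + 1 → j + 2 ≤ n → L (j + 2) = (Mc j).comap (zmul m (w i)) := by
    intro j a b
    rw [← hq j (by omega), q_hi hX hi a, comap_map_z]
  obtain ⟨i, rfl⟩ : ∃ i', i = i' + 1 := ⟨i - 1, by omega⟩
  simp only [Nat.add_sub_cancel] at *
  have b := lo i (by omega)
  refine ⟨lo, hi', ?_, ?_, ?_⟩
  · rw [← b]; exact h1 i (by omega)
  · rw [← hi' i le_rfl (by omega)]; exact h1 (i + 1) (by omega)
  · rw [← b]; exact h3 i (by omega)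

/-- the map `q : X(k)^i_w → Y(d_i·k)_{d_i·w}` is well defined and
surjective, and its fibre over a point `(M₁,…,M_{n-2})` is in bijection, via
`L ↦ L_i/L_{i-1}`, with the `k_i`-dimensional subspaces of the `m`-dimensional space
`L_{i+1}/M_{i-1}` where `L_{i+1} = {x : (z-w_i)·x ∈ M_{i-1}}`. -/
theorem statement6 (m : ℕ) (hm : 2 ≤ m) (n : ℕ) (k : ℕ → ℕ) (w : ℕ → ℂ)
    (hk : ∀ j, 1 ≤ j → j ≤ n → 1 ≤ k j ∧ k j ≤ m - 1)
    (i : ℕ) (hi : 1 ≤ i) (hin : i + 1 ≤ n)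
    (hki : k i + k (i + 1) = m) (hww : w i = w (i + 1)) :
    -- q is well defined
    (∀ L : ℕ → SubM m, IsYChain m n k w L →
        (L (i + 1)).map (zmul m (w i)) = L (i - 1) →
        IsYChain m (n - 2) (dropAt i k) (dropAt i w) (qChain m i w L)) ∧
    -- q is surjective
    (∀ Mc : ℕ → SubM m, IsYChain m (n - 2) (dropAt i k) (dropAt i w) Mc →
        ∃ L : ℕ → SubM m, InFibre m n i k w Mc L) ∧
    -- description of the fibres
    (∀ Mc : ℕ → SubM m, IsYChain m (n - 2) (dropAt i k) (dropAt i w) Mc →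
      ∀ P : SubM m, P = (Mc (i - 1)).comap (zmul m (w i)) →
        -- P/M_{i-1} is an m-dimensional ℂ-vector space
        fdim m (Mc (i - 1)) P = m ∧
        -- L ↦ L_i/M_{i-1} is injective on the fibre
        (∀ L L' : ℕ → SubM m, InFibre m n i k w Mc L → InFibre m n i k w Mc L' →
            fibreImg m i Mc P L = fibreImg m i Mc P L' → ∀ j ≤ n, L j = L' j) ∧
        -- and its image is exactly the set of k_i-dimensional subspaces
        (∀ V : Submodule ℂ (QuotMod m (Mc (i - 1)) P),
            (∃ L : ℕ → SubM m, InFibre m n i k w Mc L ∧ fibreImg m i Mc P L = V) ↔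
              Module.finrank ℂ ↥V = k i)) := by
  have main : ∀ Mc : ℕ → SubM m, IsYChain m (n - 2) (dropAt i k) (dropAt i w) Mc →
      ∀ P : SubM m, P = (Mc (i - 1)).comap (zmul m (w i)) →
      ∀ V : Submodule ℂ (QuotMod m (Mc (i - 1)) P), Module.finrank ℂ ↥V = k i →
      ∃ L : ℕ → SubM m, InFibre m n i k w Mc L ∧ fibreImg m i Mc P L = V := by
    intro Mc hM P hP V hV
    have hA := le_liftV hP V
    have hB := liftV_le hP V
    have hC := imgC_liftV hP V
    have hD := imgC_finrank hA hB
    rw [hC, hV] at hD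
    refine ⟨buildL m i w Mc (liftV m (w i) _ P hP V), ?_, ?_⟩
    · exact build_fibre m n k w i hi hin hki hww Mc hM _ hA (hP ▸ hB) hD.symm
    · have mid : buildL m i w Mc (liftV m (w i) _ P hP V) i = liftV m (w i) _ P hP V := by
        simp [buildL]
      rw [fibreImg_eq, mid, hC]
  refine ⟨fun L hL hX => q_wd m n k w i hi L hL hX, ?_, ?_⟩
  · intro Mc hM
    obtain ⟨g1, g2, g3⟩ := goodDim_chain hM (w i) (i - 1) (by omega)
    obtain ⟨V, hV⟩ : ∃ V : Submodule ℂ (QuotMod m (Mc (i - 1))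
        ((Mc (i - 1)).comap (zmul m (w i)))), Module.finrank ℂ V = k i := by
      have hle : k i ≤ Module.finrank ℂ (QuotMod m (Mc (i - 1))
          ((Mc (i - 1)).comap (zmul m (w i)))) := by
        unfold fdim at g3
        omega
      obtain ⟨s, hs, hli⟩ := exists_finset_linearIndependent_of_le_finrank hle
      exact ⟨Submodule.span ℂ (s : Set _), by rw [finrank_span_finset_eq_card hli, hs]⟩
    obtain ⟨L, hL, -⟩ := main Mc hM _ rfl V hV
    exact ⟨L, hL⟩
  · intro Mc hM P hP
    obtain ⟨g1, g2, g3⟩ := goodDim_chain hM (w i) (i - 1) (by omega)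
    refine ⟨by rw [hP]; exact g3, ?_, ?_⟩
    · intro L L' hL hL' h j hj
      obtain ⟨a1, a2, a3, a4, -⟩ := fibre_facts hi hin hL
      obtain ⟨b1, b2, b3, b4, -⟩ := fibre_facts hi hin hL'
      rcases lt_trichotomy j i with c | rfl | c
      · rw [a1 j c, b1 j c]
      · rw [fibreImg_eq, fibreImg_eq] at h
        ext x
        constructor
        · intro hx
          have hxP : x ∈ P := by rw [hP]; exact a4 hx
          have := (mk_mem_imgQ (C := P) a3 ⟨x, hxP⟩).2 hx
          have h' : (Submodule.Quotient.mk ⟨x, hxP⟩ : QuotMod m (Mc (j - 1)) P) ∈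
            imgC m (Mc (j - 1)) (L' j) P := h ▸ this
          exact (mk_mem_imgQ (C := P) b3 ⟨x, hxP⟩).1 h'
        · intro hx
          have hxP : x ∈ P := by rw [hP]; exact b4 hx
          have := (mk_mem_imgQ (C := P) b3 ⟨x, hxP⟩).2 hx
          have h' : (Submodule.Quotient.mk ⟨x, hxP⟩ : QuotMod m (Mc (j - 1)) P) ∈
            imgC m (Mc (j - 1)) (L j) P := h.symm ▸ this
          exact (mk_mem_imgQ (C := P) a3 ⟨x, hxP⟩).1 h'
      · obtain ⟨t, rfl⟩ : ∃ t, j = t + 2 := ⟨j - 2, by omega⟩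
        rw [a2 t (by omega) hj, b2 t (by omega) hj]
    · intro V
      constructor
      · rintro ⟨L, hL, rfl⟩
        obtain ⟨a1, a2, a3, a4, a5⟩ := fibre_facts hi hin hL
        rw [fibreImg_eq, imgC_finrank a3 (by rw [hP]; exact a4), a5]
      · exact main Mc hM P hP V
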